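/- Let b ≥ 1/2, T̃ > 0, let y : [0,T̃] → (0,∞) be continuous and let Ψ : [0,T̃] → ℝ be continuous. Let I_ν(x) = Σ_{k=0}^∞ (x/2)^{2k+ν}/(k!·Γ(k+ν+1)) and q_s(z,ζ,b) = (√(zζ)/s)·(ζ/z)^b·exp(−(z²+ζ²)/(2s))·I_{b−1/2}(zζ/s). Fix τ ∈ (0,T̃] and z > 0 such that z > y(k) for all k ∈ [0,τ]. Then the Bessel potential q(τ,z) := ∫_0^τ Ψ(k)·[∂q_{τ−k}(z,ζ,b)/∂ζ]|_{ζ=y(k)} dk is well defined (the integrand extends continuously by 0 at k = τ), and on the open set of such points (τ,z) it is C¹ in τ and C² in z and satisfies ∂q/∂τ = (1/2)∂²q/∂z² + (b/z)∂q/∂z. -/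

import Mathlib

/-- Modified Bessel function of the first kind,
`I_ν(x) = Σ_{k=0}^∞ (x/2)^{2k+ν}/(k!·Γ(k+ν+1))`. -/
noncomputable def besselI (ν x : ℝ) : ℝ :=
  ∑' k : ℕ, (x / 2) ^ (2 * (k : ℝ) + ν) / ((Nat.factorial k : ℝ) * Real.Gamma ((k : ℝ) + ν + 1))

/-- Bessel heat kernel
`q_s(z,ζ,b) = (√(zζ)/s)·(ζ/z)^b·exp(−(z²+ζ²)/(2s))·I_{b−1/2}(zζ/s)`. -/
noncomputable def besselKernel (b s z ζ : ℝ) : ℝ :=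
  Real.sqrt (z * ζ) / s * (ζ / z) ^ b * Real.exp (-(z ^ 2 + ζ ^ 2) / (2 * s)) *
    besselI (b - 1 / 2) (z * ζ / s)


open Set Filter Topology

/-- The entire part of the Bessel function. -/
noncomputable def bE (μ u : ℝ) : ℝ :=
  ∑' k : ℕ, u ^ k / ((Nat.factorial k : ℝ) * Real.Gamma ((k : ℝ) + μ + 1))

lemma bGamma_pos {μ : ℝ} (hμ : 0 ≤ μ) (k : ℕ) : 0 < Real.Gamma ((k : ℝ) + μ + 1) :=
  Real.Gamma_pos_of_pos (by positivity)

lemma bGamma_ge {μ : ℝ} (hμ : 0 ≤ μ) (k : ℕ) :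
    (Nat.factorial k : ℝ) * Real.Gamma (μ + 1) ≤ Real.Gamma ((k : ℝ) + μ + 1) := by
  induction k with
  | zero => simp
  | succ k ih =>
    have h : Real.Gamma (((k + 1 : ℕ) : ℝ) + μ + 1)
        = ((k : ℝ) + μ + 1) * Real.Gamma ((k : ℝ) + μ + 1) := by
      rw [← Real.Gamma_add_one (by positivity)]
      congr 1
      push_cast
      ring
    rw [h, Nat.factorial_succ]
    push_cast
    have h0 : 0 < Real.Gamma (μ + 1) := Real.Gamma_pos_of_pos (by positivity)
    have h1 : (0 : ℝ) < Nat.factorial k := by positivity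
    calc ((k : ℝ) + 1) * (Nat.factorial k : ℝ) * Real.Gamma (μ + 1)
        = ((k : ℝ) + 1) * ((Nat.factorial k : ℝ) * Real.Gamma (μ + 1)) := by ring
      _ ≤ ((k : ℝ) + μ + 1) * Real.Gamma ((k : ℝ) + μ + 1) := by
        apply mul_le_mul _ ih (by positivity) (by positivity)
        linarith

lemma bE_term_le {μ : ℝ} (hμ : 0 ≤ μ) (k : ℕ) (u : ℝ) :
    ‖u ^ k / ((Nat.factorial k : ℝ) * Real.Gamma ((k : ℝ) + μ + 1))‖
      ≤ (Real.Gamma (μ + 1))⁻¹ * (|u| ^ k / (Nat.factorial k : ℝ)) := by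
  have h0 : 0 < Real.Gamma (μ + 1) := Real.Gamma_pos_of_pos (by positivity)
  have h1 : (1 : ℝ) ≤ Nat.factorial k := by exact_mod_cast Nat.succ_le_of_lt (Nat.factorial_pos k)
  have h2 := bGamma_ge hμ k
  have h3 := bGamma_pos hμ k
  have h4 : Real.Gamma (μ + 1) ≤ Real.Gamma ((k : ℝ) + μ + 1) := by nlinarith
  rw [norm_div, norm_pow, Real.norm_eq_abs, Real.norm_eq_abs,
    abs_of_pos (mul_pos (by positivity) h3)]
  calc |u| ^ k / ((Nat.factorial k : ℝ) * Real.Gamma ((k : ℝ) + μ + 1))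
      ≤ |u| ^ k / ((Nat.factorial k : ℝ) * Real.Gamma (μ + 1)) := by gcongr
    _ = _ := by field_simp

lemma bE_summable {μ : ℝ} (hμ : 0 ≤ μ) (u : ℝ) :
    Summable fun k : ℕ => u ^ k / ((Nat.factorial k : ℝ) * Real.Gamma ((k : ℝ) + μ + 1)) :=
  Summable.of_norm_bounded ((Real.summable_pow_div_factorial |u|).mul_left _)
    (fun k => bE_term_le hμ k u)

lemma bE_bound {μ : ℝ} (hμ : 0 ≤ μ) {x : ℝ} (hx : 0 ≤ x) :
    |bE μ (x ^ 2)| ≤ (Real.Gamma (μ + 1))⁻¹ * Real.exp (2 * x) := by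
  have h0 : 0 < Real.Gamma (μ + 1) := Real.Gamma_pos_of_pos (by positivity)
  have hs := (Real.hasSum_cosh (2 * x)).mul_left (Real.Gamma (μ + 1))⁻¹
  have key : ∀ k : ℕ, ‖(x ^ 2) ^ k / ((Nat.factorial k : ℝ) * Real.Gamma ((k : ℝ) + μ + 1))‖
      ≤ (Real.Gamma (μ + 1))⁻¹ * ((2 * x) ^ (2 * k) / (Nat.factorial (2 * k) : ℝ)) := by
    intro k
    have h2 := bGamma_ge hμ k
    have h3 := bGamma_pos hμ k
    have h1 : (0 : ℝ) < Nat.factorial k := by positivity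
    have h5 : (Nat.factorial (2 * k) : ℝ) ≤ 4 ^ k * (Nat.factorial k : ℝ) ^ 2 := by
      have e := Nat.centralBinom_le_four_pow k
      have e2 := Nat.choose_mul_factorial_mul_factorial (show k ≤ 2 * k by omega)
      rw [show 2 * k - k = k by omega, ← Nat.centralBinom_eq_two_mul_choose] at e2
      have : Nat.factorial (2 * k) ≤ 4 ^ k * (Nat.factorial k) ^ 2 := by
        rw [← e2, mul_assoc, ← sq]
        exact Nat.mul_le_mul_right _ e
      exact_mod_cast this
    rw [Real.norm_of_nonneg (by positivity)]
    calc (x ^ 2) ^ k / ((Nat.factorial k : ℝ) * Real.Gamma ((k : ℝ) + μ + 1))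
        ≤ (x ^ 2) ^ k / ((Nat.factorial k : ℝ) * ((Nat.factorial k : ℝ) * Real.Gamma (μ + 1))) := by
          gcongr
      _ = (Real.Gamma (μ + 1))⁻¹ * ((2 * x) ^ (2 * k) / (4 ^ k * (Nat.factorial k : ℝ) ^ 2)) := by
          rw [pow_mul (2 * x), mul_pow 2 x 2, mul_pow, show (2 : ℝ) ^ 2 = 4 by norm_num]
          field_simp
      _ ≤ _ := by gcongr
  have := tsum_of_norm_bounded hs key
  rw [Real.norm_eq_abs] at this
  refine this.trans ?_
  gcongr
  rw [Real.cosh_eq]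
  have : Real.exp (-(2 * x)) ≤ Real.exp (2 * x) := Real.exp_le_exp.2 (by linarith)
  linarith

lemma bE_hasDerivAt {μ : ℝ} (hμ : 0 ≤ μ) (u : ℝ) :
    HasDerivAt (bE μ) (bE (μ + 1) u) u := by
  have hterm : ∀ (k : ℕ) (v : ℝ), ((k + 1 : ℕ) : ℝ) * v ^ k /
        ((Nat.factorial (k + 1) : ℝ) * Real.Gamma (((k + 1 : ℕ) : ℝ) + μ + 1))
      = v ^ k / ((Nat.factorial k : ℝ) * Real.Gamma ((k : ℝ) + (μ + 1) + 1)) := by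
    intro k v
    rw [Nat.factorial_succ,
      show (((k + 1 : ℕ) : ℝ) + μ + 1) = ((k : ℝ) + (μ + 1) + 1) by push_cast; ring]
    have h3 := bGamma_pos (show 0 ≤ μ + 1 by linarith) k
    push_cast
    field_simp
  set g' : ℕ → ℝ → ℝ := fun k v => (k : ℝ) * v ^ (k - 1) /
        ((Nat.factorial k : ℝ) * Real.Gamma ((k : ℝ) + μ + 1)) with hg'
  have hs' : ∀ v, Summable fun k => g' k v := by
    intro v
    rw [← summable_nat_add_iff 1]
    refine (bE_summable (show 0 ≤ μ + 1 by linarith) v).congr ?_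
    intro k
    rw [hg', ← hterm]
    simp
  have hR : Summable fun k => g' k (|u| + 1) := hs' _
  have main := hasDerivAt_tsum_of_isPreconnected (𝕜 := ℝ) (F := ℝ)
    (g := fun (k : ℕ) v => v ^ k / ((Nat.factorial k : ℝ) * Real.Gamma ((k : ℝ) + μ + 1)))
    (g' := g') (t := Metric.ball 0 (|u| + 1)) (y₀ := u) (y := u) hR Metric.isOpen_ball
    (convex_ball _ _).isPreconnected
    (fun k v _ => (hasDerivAt_pow k v).div_const _) ?_ (by simp) (bE_summable hμ u) (by simp)
  · convert! main using 1
    rw [(hs' u).tsum_eq_zero_add]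
    simp only [hg', Nat.cast_zero, zero_mul, zero_div, zero_add]
    unfold bE
    refine tsum_congr fun k => ?_
    rw [← hterm]
    simp
  · intro k v hv
    have hv' : |v| ≤ |u| + 1 := by
      have := mem_ball_zero_iff.1 hv
      rw [Real.norm_eq_abs] at this
      exact this.le
    have h3 := bGamma_pos hμ k
    rw [hg']
    simp only
    rw [norm_div, norm_mul, norm_pow, Real.norm_eq_abs v,
      Real.norm_of_nonneg (mul_nonneg (Nat.cast_nonneg _) h3.le),
      Real.norm_of_nonneg (Nat.cast_nonneg (α := ℝ) k)]
    gcongr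

lemma bE_rec {μ : ℝ} (hμ : 0 ≤ μ) (u : ℝ) :
    bE μ u = (μ + 1) * bE (μ + 1) u + u * bE (μ + 2) u := by
  have s0 := bE_summable hμ u
  have s1 := bE_summable (show 0 ≤ μ + 1 by linarith) u
  have s2 := bE_summable (show 0 ≤ μ + 2 by linarith) u
  unfold bE
  rw [s0.tsum_eq_zero_add, s1.tsum_eq_zero_add, mul_add, ← tsum_mul_left, ← tsum_mul_left,
    add_assoc ((μ + 1) * _), ← Summable.tsum_add]
  · congr 1
    · have h := bGamma_pos hμ 0
      have : Real.Gamma (μ + 1 + 1) = (μ + 1) * Real.Gamma (μ + 1) :=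
        Real.Gamma_add_one (by positivity)
      simp only [Nat.cast_zero, zero_add, pow_zero, Nat.factorial_zero, Nat.cast_one, one_mul] at *
      rw [this]
      have : μ + 1 ≠ 0 := by positivity
      field_simp
    · refine tsum_congr fun k => ?_
      have h := bGamma_pos hμ (k + 1)
      have e : Real.Gamma (((k + 1 : ℕ) : ℝ) + (μ + 1) + 1)
          = (((k + 1 : ℕ) : ℝ) + μ + 1) * Real.Gamma (((k + 1 : ℕ) : ℝ) + μ + 1) := by
        rw [← Real.Gamma_add_one (by positivity)]
        congr 1
        ring
      have e2 : (k : ℝ) + (μ + 2) + 1 = ((k + 1 : ℕ) : ℝ) + (μ + 1) + 1 := by push_cast; ring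
      rw [e2, e, Nat.factorial_succ]
      have h6 : (((k + 1 : ℕ) : ℝ) + μ + 1) ≠ 0 := by positivity
      push_cast at *
      field_simp
      ring
  · exact ((summable_nat_add_iff 1).2 s1).mul_left _
  · exact s2.mul_left _

lemma bE_continuous {μ : ℝ} (hμ : 0 ≤ μ) : Continuous (bE μ) :=
  continuous_iff_continuousAt.2 fun u => (bE_hasDerivAt hμ u).continuousAt

/-- Differentiation under the integral over a compact interval. -/
lemma param_integral {J : Set ℝ} (hJ : IsOpen J) {M : ℝ} (hM : 0 ≤ M) {F F' : ℝ → ℝ → ℝ}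
    (hF : ContinuousOn (fun p : ℝ × ℝ => F p.1 p.2) (J ×ˢ Icc 0 M))
    (hF' : ContinuousOn (fun p : ℝ × ℝ => F' p.1 p.2) (J ×ˢ Icc 0 M))
    (hd : ∀ x ∈ J, ∀ k ∈ Icc 0 M, HasDerivAt (fun x => F x k) (F' x k) x) :
    (∀ x ∈ J, HasDerivAt (fun x => ∫ k in (0:ℝ)..M, F x k) (∫ k in (0:ℝ)..M, F' x k) x) ∧
    ContinuousOn (fun x => ∫ k in (0:ℝ)..M, F' x k) J := by
  have sl : ∀ {G : ℝ → ℝ → ℝ}, ContinuousOn (fun p : ℝ × ℝ => G p.1 p.2) (J ×ˢ Icc 0 M) →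
      ∀ x ∈ J, ContinuousOn (G x) (Icc 0 M) := by
    intro G hG x hx
    exact hG.comp (f := fun k : ℝ => (x, k)) (by fun_prop) (fun k hk => ⟨hx, hk⟩)
  have meas : ∀ {G : ℝ → ℝ → ℝ}, ContinuousOn (fun p : ℝ × ℝ => G p.1 p.2) (J ×ˢ Icc 0 M) →
      ∀ x ∈ J, MeasureTheory.AEStronglyMeasurable (G x)
        (MeasureTheory.volume.restrict (Set.uIoc 0 M)) := by
    intro G hG x hx
    rw [uIoc_of_le hM]
    exact ((sl hG x hx).mono Ioc_subset_Icc_self).aestronglyMeasurable measurableSet_Ioc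
  have bd : ∀ x ∈ J, ∃ C : ℝ, ∃ s ∈ 𝓝 x, s ⊆ J ∧ ∀ w ∈ s, ∀ k ∈ Icc 0 M, ‖F' w k‖ ≤ C := by
    intro x hx
    obtain ⟨s, hs, hsJ, hsc⟩ := local_compact_nhds (hJ.mem_nhds hx)
    obtain ⟨C, hC⟩ := (hsc.prod isCompact_Icc).exists_bound_of_continuousOn
      (hF'.mono (prod_mono hsJ Subset.rfl))
    exact ⟨C, s, hs, hsJ, fun w hw k hk => hC (w, k) ⟨hw, hk⟩⟩
  constructor
  · intro x hx
    obtain ⟨C, s, hs, hsJ, hC⟩ := bd x hx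
    refine (intervalIntegral.hasDerivAt_integral_of_dominated_loc_of_deriv_le
      (F := F) (F' := F') (bound := fun _ => C) hs ?_ ?_ (meas hF' x hx) ?_ ?_ ?_).2
    · filter_upwards [hs] with w hw using meas hF w (hsJ hw)
    · exact (sl hF x hx).intervalIntegrable_of_Icc hM
    · refine Eventually.of_forall fun k hk w hw => hC w hw k ?_
      rw [uIoc_of_le hM] at hk
      exact Ioc_subset_Icc_self hk
    · exact intervalIntegrable_const
    · refine Eventually.of_forall fun k hk w hw => hd w (hsJ hw) k ?_
      rw [uIoc_of_le hM] at hk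
      exact Ioc_subset_Icc_self hk
  · intro x hx
    obtain ⟨C, s, hs, hsJ, hC⟩ := bd x hx
    refine ContinuousAt.continuousWithinAt ?_
    refine intervalIntegral.continuousAt_of_dominated_interval (bound := fun _ => C) ?_ ?_ ?_ ?_
    · filter_upwards [hs] with w hw using meas hF' w (hsJ hw)
    · filter_upwards [hs] with w hw
      refine Eventually.of_forall fun k hk => hC w hw k ?_
      rw [uIoc_of_le hM] at hk
      exact Ioc_subset_Icc_self hk
    · exact intervalIntegrable_const
    · refine Eventually.of_forall fun k hk => ?_
      rw [uIoc_of_le hM] at hk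
      have := hF'.comp (f := fun w : ℝ => (w, k)) (s := J) (by fun_prop)
        (fun w hw => ⟨hw, Ioc_subset_Icc_self hk⟩)
      exact this.continuousAt (hJ.mem_nhds hx)

/-- Building blocks of the kernel, extended by zero to `s ≤ 0`. -/
noncomputable def ph (b : ℝ) (i j : ℕ) (s z ζ : ℝ) : ℝ :=
  if 0 < s then
    s ^ (-(b + 1 / 2)) * (s⁻¹) ^ i * Real.exp (-(z ^ 2 + ζ ^ 2) / (2 * s)) *
      bE (b - 1 / 2 + (j : ℝ)) (z ^ 2 * ζ ^ 2 / (4 * s ^ 2))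
  else 0

lemma ph_nonpos {b : ℝ} {i j : ℕ} {s z ζ : ℝ} (hs : s ≤ 0) : ph b i j s z ζ = 0 := by
  simp [ph, not_lt.2 hs]

lemma ph_pos {b : ℝ} {i j : ℕ} {s z ζ : ℝ} (hs : 0 < s) : ph b i j s z ζ =
    s ^ (-(b + 1 / 2)) * (s⁻¹) ^ i * Real.exp (-(z ^ 2 + ζ ^ 2) / (2 * s)) *
      bE (b - 1 / 2 + (j : ℝ)) (z ^ 2 * ζ ^ 2 / (4 * s ^ 2)) := by
  simp [ph, hs]

lemma ph_symm (b : ℝ) (i j : ℕ) (s z ζ : ℝ) : ph b i j s z ζ = ph b i j s ζ z := by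
  simp only [ph, add_comm (z ^ 2), mul_comm (z ^ 2)]

lemma ph_hasDerivAt_z {b : ℝ} (hb : 1 / 2 ≤ b) (i j : ℕ) (s z ζ : ℝ) :
    HasDerivAt (fun w => ph b i j s w ζ)
      (-z * ph b (i + 1) j s z ζ + z * ζ ^ 2 / 2 * ph b (i + 2) (j + 1) s z ζ) z := by
  rcases le_or_gt s 0 with hs | hs
  · simp only [ph_nonpos hs, mul_zero, add_zero]
    exact hasDerivAt_const _ _
  · simp only [ph_pos hs]
    have hμ : 0 ≤ b - 1 / 2 + (j : ℝ) := by
      have : (0 : ℝ) ≤ j := Nat.cast_nonneg j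
      linarith
    have hpow : HasDerivAt (fun w : ℝ => w ^ 2) (2 * z) z := by
      simpa using hasDerivAt_pow 2 z
    have h1 : HasDerivAt (fun w : ℝ => Real.exp (-(w ^ 2 + ζ ^ 2) / (2 * s)))
        (Real.exp (-(z ^ 2 + ζ ^ 2) / (2 * s)) * (-(2 * z) / (2 * s))) z :=
      (((hpow.add_const (ζ ^ 2)).neg).div_const (2 * s)).exp
    have h2 : HasDerivAt (fun w : ℝ => w ^ 2 * ζ ^ 2 / (4 * s ^ 2))
        (2 * z * ζ ^ 2 / (4 * s ^ 2)) z := (hpow.mul_const _).div_const _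
    have h3 := (bE_hasDerivAt hμ (z ^ 2 * ζ ^ 2 / (4 * s ^ 2))).comp z h2
    have h4 := (h1.const_mul (s ^ (-(b + 1 / 2)) * (s⁻¹) ^ i)).mul h3
    refine h4.congr_deriv ?_
    simp only [Function.comp, Nat.cast_add, Nat.cast_one, ← add_assoc, pow_succ]
    field_simp
    ring

lemma ph_hasDerivAt_s_pos {b : ℝ} (hb : 1 / 2 ≤ b) (i j : ℕ) {s : ℝ} (z ζ : ℝ) (hs : 0 < s) :
    HasDerivAt (fun t => ph b i j t z ζ)
      (-(b + 1 / 2 + (i : ℝ)) * ph b (i + 1) j s z ζ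
        + (z ^ 2 + ζ ^ 2) / 2 * ph b (i + 2) j s z ζ
        - z ^ 2 * ζ ^ 2 / 2 * ph b (i + 3) (j + 1) s z ζ) s := by
  have hμ : 0 ≤ b - 1 / 2 + (j : ℝ) := by
    have : (0 : ℝ) ≤ j := Nat.cast_nonneg j
    linarith
  have hs0 : s ≠ 0 := hs.ne'
  have hr : HasDerivAt (fun t : ℝ => t ^ (-(b + 1 / 2)))
      (-(b + 1 / 2) * (s ^ (-(b + 1 / 2)) * s⁻¹)) s := by
    have := Real.hasDerivAt_rpow_const (p := -(b + 1 / 2)) (Or.inl hs0)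
    rwa [Real.rpow_sub_one hs0, div_eq_mul_inv] at this
  have hi : HasDerivAt (fun t : ℝ => (t⁻¹) ^ i) (-(i : ℝ) * ((s⁻¹) ^ (i + 1))) s := by
    have := (hasDerivAt_inv hs0).pow i
    refine this.congr_deriv ?_
    rcases i with _ | i
    · simp
    · simp only [Nat.add_sub_cancel, pow_succ]
      field_simp
  have hv : HasDerivAt (fun t : ℝ => -(z ^ 2 + ζ ^ 2) / (2 * t))
      ((z ^ 2 + ζ ^ 2) / 2 * (s⁻¹) ^ 2) s := by
    have := (hasDerivAt_inv hs0).const_mul (-(z ^ 2 + ζ ^ 2) / 2)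
    refine (this.congr_deriv ?_).congr_of_eventuallyEq (Eventually.of_forall fun t => ?_)
    · field_simp
    · simp only
      rw [div_mul_eq_div_div, div_eq_mul_inv _ t]
  have hw : HasDerivAt (fun t : ℝ => z ^ 2 * ζ ^ 2 / (4 * t ^ 2))
      (-(z ^ 2 * ζ ^ 2) / 2 * (s⁻¹) ^ 3) s := by
    have := ((hasDerivAt_inv hs0).pow 2).const_mul (z ^ 2 * ζ ^ 2 / 4)
    refine (this.congr_deriv ?_).congr_of_eventuallyEq (Eventually.of_forall fun t => ?_)
    · simp
      field_simp
      ring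
    · simp only [Pi.pow_apply]
      rw [div_mul_eq_div_div, div_eq_mul_inv _ (t ^ 2), inv_pow]
  have h3 := (bE_hasDerivAt hμ (z ^ 2 * ζ ^ 2 / (4 * s ^ 2))).comp s hw
  have h4 := ((hr.mul hi).mul hv.exp).mul h3
  have h5 : (fun t => ph b i j t z ζ) =ᶠ[𝓝 s] fun t =>
      t ^ (-(b + 1 / 2)) * (t⁻¹) ^ i * Real.exp (-(z ^ 2 + ζ ^ 2) / (2 * t)) *
      bE (b - 1 / 2 + (j : ℝ)) (z ^ 2 * ζ ^ 2 / (4 * t ^ 2)) := by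
    filter_upwards [lt_mem_nhds hs] with t ht using ph_pos ht
  refine HasDerivAt.congr_of_eventuallyEq ?_ h5
  refine h4.congr_deriv ?_
  simp only [ph_pos hs, Function.comp, Nat.cast_add, Nat.cast_one, ← add_assoc, Pi.mul_apply]
  generalize bE (b - 1 / 2 + (j : ℝ) + 1) (z ^ 2 * ζ ^ 2 / (4 * s ^ 2)) = e1
  generalize bE (b - 1 / 2 + (j : ℝ)) (z ^ 2 * ζ ^ 2 / (4 * s ^ 2)) = e0
  generalize Real.exp _ = e
  ring

lemma ph_bound {b : ℝ} (hb : 1 / 2 ≤ b) (i j : ℕ) {s z ζ : ℝ} (hs : 0 < s) (hz : 0 ≤ z)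
    (hζ : 0 ≤ ζ) : |ph b i j s z ζ| ≤ (Real.Gamma (b - 1 / 2 + (j : ℝ) + 1))⁻¹ *
      ((s⁻¹) ^ (b + 1 / 2 + (i : ℝ)) * Real.exp (-((z - ζ) ^ 2 / 2) * s⁻¹)) := by
  have hμ : 0 ≤ b - 1 / 2 + (j : ℝ) := by
    have : (0 : ℝ) ≤ j := Nat.cast_nonneg j
    linarith
  have hB := bE_bound hμ (show 0 ≤ z * ζ / (2 * s) by positivity)
  rw [ph_pos hs, abs_mul, abs_of_pos (by positivity : 0 < s ^ (-(b + 1 / 2)) * (s⁻¹) ^ i *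
    Real.exp (-(z ^ 2 + ζ ^ 2) / (2 * s)))]
  rw [show z ^ 2 * ζ ^ 2 / (4 * s ^ 2) = (z * ζ / (2 * s)) ^ 2 by field_simp; norm_num]
  refine (mul_le_mul_of_nonneg_left hB (by positivity)).trans (le_of_eq ?_)
  rw [Real.rpow_add (inv_pos.2 hs), Real.rpow_natCast, Real.inv_rpow hs.le, ← Real.rpow_neg hs.le,
    show -((z - ζ) ^ 2 / 2) * s⁻¹ = -(z ^ 2 + ζ ^ 2) / (2 * s) + 2 * (z * ζ / (2 * s)) by
      field_simp; ring, Real.exp_add]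
  ring

lemma ph_continuousOn {b : ℝ} (hb : 1 / 2 ≤ b) (i j : ℕ) :
    ContinuousOn (fun p : ℝ × ℝ × ℝ => ph b i j p.1 p.2.1 p.2.2)
      {p | 0 < p.2.2 ∧ p.2.2 < p.2.1} := by
  have hμ : 0 ≤ b - 1 / 2 + (j : ℝ) := by
    have : (0 : ℝ) ≤ j := Nat.cast_nonneg j
    linarith
  rintro ⟨s, z, ζ⟩ ⟨h1, h2⟩
  simp only at h1 h2
  refine ContinuousAt.continuousWithinAt ?_
  have hfst : Tendsto (fun p : ℝ × ℝ × ℝ => p.1) (𝓝 (s, z, ζ)) (𝓝 s) :=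
    continuous_fst.continuousAt
  rcases lt_trichotomy s 0 with hs | hs | hs
  · refine (continuousAt_const (y := (0 : ℝ))).congr ?_
    filter_upwards [hfst.eventually (gt_mem_nhds hs)] with p hp
    exact (ph_nonpos hp.le).symm
  · subst hs
    set C := (Real.Gamma (b - 1 / 2 + (j : ℝ) + 1))⁻¹ with hC
    have hCpos : 0 < C := inv_pos.2 (Real.Gamma_pos_of_pos (by linarith))
    set δ := (z - ζ) ^ 2 / 4 with hδ
    have hδpos : 0 < δ := by
      have : 0 < z - ζ := by linarith
      positivity
    let G : ℝ → ℝ := fun t => if 0 < t then C * ((t⁻¹) ^ (b + 1 / 2 + (i : ℝ)) *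
      Real.exp (-δ * t⁻¹)) else 0
    have hG : Tendsto G (𝓝 0) (𝓝 0) := by
      have hlim : Tendsto (fun t : ℝ => C * ((t⁻¹) ^ (b + 1 / 2 + (i : ℝ)) *
          Real.exp (-δ * t⁻¹))) (𝓝[>] 0) (𝓝 0) := by
        have := ((tendsto_rpow_mul_exp_neg_mul_atTop_nhds_zero (b + 1 / 2 + (i : ℝ)) δ hδpos).comp
          tendsto_inv_nhdsGT_zero).const_mul C
        simpa using this
      have : Tendsto G (𝓝[>] 0 ⊔ 𝓝[≤] 0) (𝓝 0) := by
        refine Tendsto.sup ?_ ?_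
        · refine hlim.congr' ?_
          filter_upwards [self_mem_nhdsWithin] with t ht
          simp only [G]
          rw [if_pos (mem_Ioi.1 ht)]
        · refine tendsto_const_nhds.congr' ?_
          filter_upwards [self_mem_nhdsWithin] with t ht
          simp only [G]
          rw [if_neg (not_lt.2 (mem_Iic.1 ht))]
      rwa [nhdsGT_sup_nhdsLE] at this
    rw [ContinuousAt, ph_nonpos le_rfl]
    refine squeeze_zero_norm' ?_ (hG.comp hfst)
    have hc1 : Continuous fun p : ℝ × ℝ × ℝ => (p.2.1 - p.2.2) ^ 2 / 2 := by fun_prop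
    have e1 : ∀ᶠ p in 𝓝 ((0 : ℝ), z, ζ), δ < (p.2.1 - p.2.2) ^ 2 / 2 := by
      refine hc1.continuousAt.eventually (lt_mem_nhds ?_)
      simp only [hδ]
      have : 0 < z - ζ := by linarith
      have : 0 < (z - ζ) ^ 2 := by positivity
      linarith
    have e2 : ∀ᶠ p in 𝓝 ((0 : ℝ), z, ζ), 0 < p.2.1 :=
      (continuous_fst.comp continuous_snd).continuousAt.eventually (lt_mem_nhds (h1.trans h2))
    have e3 : ∀ᶠ p in 𝓝 ((0 : ℝ), z, ζ), 0 < p.2.2 :=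
      (continuous_snd.comp continuous_snd).continuousAt.eventually (lt_mem_nhds h1)
    filter_upwards [e1, e2, e3] with p h1 h2 h3
    simp only [Function.comp, G]
    split_ifs with hp
    · refine (ph_bound hb i j hp h2.le h3.le).trans ?_
      have : 0 < p.1⁻¹ := inv_pos.2 hp
      gcongr
    · simp [ph_nonpos (not_lt.1 hp)]
  · have h5 : (fun p : ℝ × ℝ × ℝ =>
      p.1 ^ (-(b + 1 / 2)) * (p.1⁻¹) ^ i * Real.exp (-(p.2.1 ^ 2 + p.2.2 ^ 2) / (2 * p.1)) *
      bE (b - 1 / 2 + (j : ℝ)) (p.2.1 ^ 2 * p.2.2 ^ 2 / (4 * p.1 ^ 2))) =ᶠ[𝓝 (s, z, ζ)]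
      (fun p : ℝ × ℝ × ℝ => ph b i j p.1 p.2.1 p.2.2) := by
      filter_upwards [hfst.eventually (lt_mem_nhds hs)] with p hp using (ph_pos hp).symm
    refine ContinuousAt.congr ?_ h5
    have hs0 : s ≠ 0 := hs.ne'
    have hE := bE_continuous hμ
    have c1 : ContinuousAt (fun p : ℝ × ℝ × ℝ => p.1) (s, z, ζ) := continuous_fst.continuousAt
    refine ContinuousAt.mul (ContinuousAt.mul (ContinuousAt.mul ?_ ?_) ?_) ?_
    · exact c1.rpow_const (Or.inl hs0)
    · exact (c1.inv₀ hs0).pow i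
    · refine ContinuousAt.rexp (ContinuousAt.div (by fun_prop) (by fun_prop) ?_)
      simpa using hs0
    · refine hE.continuousAt.comp (ContinuousAt.div (by fun_prop) (by fun_prop) ?_)
      simpa using hs0

lemma ph_hasDerivAt_s {b : ℝ} (hb : 1 / 2 ≤ b) (i j : ℕ) (s : ℝ) {z ζ : ℝ} (hζ : 0 < ζ)
    (hz : ζ < z) :
    HasDerivAt (fun t => ph b i j t z ζ)
      (-(b + 1 / 2 + (i : ℝ)) * ph b (i + 1) j s z ζ
        + (z ^ 2 + ζ ^ 2) / 2 * ph b (i + 2) j s z ζ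
        - z ^ 2 * ζ ^ 2 / 2 * ph b (i + 3) (j + 1) s z ζ) s := by
  rcases lt_trichotomy s 0 with hs | hs | hs
  · simp only [ph_nonpos hs.le, mul_zero, add_zero, sub_zero]
    refine (hasDerivAt_const s (0 : ℝ)).congr_of_eventuallyEq ?_
    filter_upwards [gt_mem_nhds hs] with t ht using ph_nonpos ht.le
  · subst hs
    simp only [ph_nonpos le_rfl, mul_zero, add_zero, sub_zero]
    rw [hasDerivAt_iff_tendsto_slope]
    have hc : Continuous (fun t : ℝ => ph b (i + 1) j t z ζ) := by
      have := (ph_continuousOn hb (i + 1) j).comp_continuous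
        (f := fun t : ℝ => (t, z, ζ)) (by fun_prop) (fun t => ⟨hζ, hz⟩)
      exact this
    have h0 : Tendsto (fun t : ℝ => ph b (i + 1) j t z ζ) (𝓝[≠] 0) (𝓝 0) := by
      have := hc.tendsto 0
      rw [ph_nonpos le_rfl] at this
      exact this.mono_left nhdsWithin_le_nhds
    refine h0.congr fun t => ?_
    rw [slope_def_field, ph_nonpos (le_refl (0 : ℝ)), sub_zero, sub_zero]
    rcases le_or_gt t 0 with ht | ht
    · simp [ph_nonpos ht]
    · rw [ph_pos ht, ph_pos ht, pow_succ]
      field_simp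
  · exact ph_hasDerivAt_s_pos hb i j z ζ hs

lemma ph_rec {b : ℝ} (hb : 1 / 2 ≤ b) (i j : ℕ) (s z ζ : ℝ) :
    ph b i j s z ζ = (b + 1 / 2 + (j : ℝ)) * ph b i (j + 1) s z ζ
      + z ^ 2 * ζ ^ 2 / 4 * ph b (i + 2) (j + 2) s z ζ := by
  have hμ : 0 ≤ b - 1 / 2 + (j : ℝ) := by
    have : (0 : ℝ) ≤ j := Nat.cast_nonneg j
    linarith
  rcases le_or_gt s 0 with hs | hs
  · simp [ph_nonpos hs]
  · simp only [ph_pos hs]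
    rw [bE_rec hμ]
    push_cast
    simp only [← add_assoc, pow_add]
    field_simp
    ring

/-- The (normalised) `ζ`-derivative of the kernel. -/
noncomputable def bH (b s z ζ : ℝ) : ℝ :=
  2 * b * ph b 0 0 s z ζ - ζ ^ 2 * ph b 1 0 s z ζ + z ^ 2 * ζ ^ 2 / 2 * ph b 2 1 s z ζ

/-- `z`-derivative of `ph`. -/
noncomputable def phz (b : ℝ) (i j : ℕ) (s z ζ : ℝ) : ℝ :=
  -z * ph b (i + 1) j s z ζ + z * ζ ^ 2 / 2 * ph b (i + 2) (j + 1) s z ζ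

/-- second `z`-derivative of `ph`. -/
noncomputable def phzz (b : ℝ) (i j : ℕ) (s z ζ : ℝ) : ℝ :=
  (-1 * ph b (i + 1) j s z ζ + -z * phz b (i + 1) j s z ζ) +
   (ζ ^ 2 / 2 * ph b (i + 2) (j + 1) s z ζ + z * ζ ^ 2 / 2 * phz b (i + 2) (j + 1) s z ζ)

/-- `s`-derivative of `ph`. -/
noncomputable def phs (b : ℝ) (i j : ℕ) (s z ζ : ℝ) : ℝ :=
  -(b + 1 / 2 + (i : ℝ)) * ph b (i + 1) j s z ζ
        + (z ^ 2 + ζ ^ 2) / 2 * ph b (i + 2) j s z ζ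
        - z ^ 2 * ζ ^ 2 / 2 * ph b (i + 3) (j + 1) s z ζ

/-- `z`-derivative of `bH`. -/
noncomputable def bHz (b s z ζ : ℝ) : ℝ :=
  2 * b * phz b 0 0 s z ζ - ζ ^ 2 * phz b 1 0 s z ζ +
    (z * ζ ^ 2 * ph b 2 1 s z ζ + z ^ 2 * ζ ^ 2 / 2 * phz b 2 1 s z ζ)

/-- second `z`-derivative of `bH`. -/
noncomputable def bHzz (b s z ζ : ℝ) : ℝ :=
  2 * b * phzz b 0 0 s z ζ - ζ ^ 2 * phzz b 1 0 s z ζ +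
    ((ζ ^ 2 * ph b 2 1 s z ζ + z * ζ ^ 2 * phz b 2 1 s z ζ) +
      (z * ζ ^ 2 * phz b 2 1 s z ζ + z ^ 2 * ζ ^ 2 / 2 * phzz b 2 1 s z ζ))

/-- `s`-derivative of `bH`. -/
noncomputable def bHs (b s z ζ : ℝ) : ℝ :=
  2 * b * phs b 0 0 s z ζ - ζ ^ 2 * phs b 1 0 s z ζ + z ^ 2 * ζ ^ 2 / 2 * phs b 2 1 s z ζ

lemma phz_hasDerivAt {b : ℝ} (hb : 1 / 2 ≤ b) (i j : ℕ) (s z ζ : ℝ) :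
    HasDerivAt (fun w => phz b i j s w ζ) (phzz b i j s z ζ) z := by
  have h1 : HasDerivAt (fun w : ℝ => -w) (-1) z := (hasDerivAt_id z).neg
  have h2 : HasDerivAt (fun w : ℝ => w * ζ ^ 2 / 2) (ζ ^ 2 / 2) z := by
    simpa using ((hasDerivAt_id z).mul_const (ζ ^ 2)).div_const 2
  exact (h1.mul (ph_hasDerivAt_z hb (i + 1) j s z ζ)).add
    (h2.mul (ph_hasDerivAt_z hb (i + 2) (j + 1) s z ζ))

lemma bH_hasDerivAt_z {b : ℝ} (hb : 1 / 2 ≤ b) (s z ζ : ℝ) :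
    HasDerivAt (fun w => bH b s w ζ) (bHz b s z ζ) z := by
  have h2 : HasDerivAt (fun w : ℝ => w ^ 2 * ζ ^ 2 / 2) (z * ζ ^ 2) z := by
    refine (((hasDerivAt_pow 2 z).mul_const (ζ ^ 2)).div_const 2).congr_deriv ?_
    simp
    ring
  exact (((ph_hasDerivAt_z hb 0 0 s z ζ).const_mul (2 * b)).sub
    ((ph_hasDerivAt_z hb 1 0 s z ζ).const_mul (ζ ^ 2))).add
    (h2.mul (ph_hasDerivAt_z hb 2 1 s z ζ))

lemma bHz_hasDerivAt_z {b : ℝ} (hb : 1 / 2 ≤ b) (s z ζ : ℝ) :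
    HasDerivAt (fun w => bHz b s w ζ) (bHzz b s z ζ) z := by
  have h2 : HasDerivAt (fun w : ℝ => w ^ 2 * ζ ^ 2 / 2) (z * ζ ^ 2) z := by
    refine (((hasDerivAt_pow 2 z).mul_const (ζ ^ 2)).div_const 2).congr_deriv ?_
    simp
    ring
  have h1 : HasDerivAt (fun w : ℝ => w * ζ ^ 2) (ζ ^ 2) z := by
    simpa using ((hasDerivAt_id z).mul_const (ζ ^ 2))
  exact (((phz_hasDerivAt hb 0 0 s z ζ).const_mul (2 * b)).sub
    ((phz_hasDerivAt hb 1 0 s z ζ).const_mul (ζ ^ 2))).add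
    ((h1.mul (ph_hasDerivAt_z hb 2 1 s z ζ)).add (h2.mul (phz_hasDerivAt hb 2 1 s z ζ)))

lemma bH_hasDerivAt_s {b : ℝ} (hb : 1 / 2 ≤ b) (s : ℝ) {z ζ : ℝ} (hζ : 0 < ζ) (hz : ζ < z) :
    HasDerivAt (fun t => bH b t z ζ) (bHs b s z ζ) s :=
  (((ph_hasDerivAt_s hb 0 0 s hζ hz).const_mul (2 * b)).sub
    ((ph_hasDerivAt_s hb 1 0 s hζ hz).const_mul (ζ ^ 2))).add
    ((ph_hasDerivAt_s hb 2 1 s hζ hz).const_mul (z ^ 2 * ζ ^ 2 / 2))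

lemma bH_pde {b : ℝ} (hb : 1 / 2 ≤ b) (s : ℝ) {z ζ : ℝ} (hz : z ≠ 0) :
    bHs b s z ζ = 1 / 2 * bHzz b s z ζ + b / z * bHz b s z ζ := by
  have r := fun i j => ph_rec hb i j s z ζ
  simp only [bHs, bHzz, bHz, phzz, phz, phs, Nat.reduceAdd, Nat.cast_zero, Nat.cast_one,
    Nat.cast_ofNat]
  simp only [r _ 0, r _ 1, Nat.reduceAdd, Nat.cast_zero, Nat.cast_one]
  field_simp
  ring

lemma bH_cont {b : ℝ} (hb : 1 / 2 ≤ b) :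
    ContinuousOn (fun p : ℝ × ℝ × ℝ => bH b p.1 p.2.1 p.2.2) {p | 0 < p.2.2 ∧ p.2.2 < p.2.1} ∧
    ContinuousOn (fun p : ℝ × ℝ × ℝ => bHs b p.1 p.2.1 p.2.2) {p | 0 < p.2.2 ∧ p.2.2 < p.2.1} ∧
    ContinuousOn (fun p : ℝ × ℝ × ℝ => bHz b p.1 p.2.1 p.2.2) {p | 0 < p.2.2 ∧ p.2.2 < p.2.1} ∧
    ContinuousOn (fun p : ℝ × ℝ × ℝ => bHzz b p.1 p.2.1 p.2.2)
      {p | 0 < p.2.2 ∧ p.2.2 < p.2.1} := by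
  have h := fun i j => ph_continuousOn hb i j
  simp only [bH, bHs, bHz, bHzz, phzz, phz, phs]
  refine ⟨?_, ?_, ?_, ?_⟩ <;> fun_prop

lemma bH_nonpos {b s z ζ : ℝ} (hs : s ≤ 0) : bH b s z ζ = 0 := by
  simp [bH, ph_nonpos hs]

lemma besselKernel_eq {b s z ζ : ℝ} (hs : 0 < s) (hz : 0 < z) (hζ : 0 < ζ) :
    besselKernel b s z ζ = (2 : ℝ) ^ (1 / 2 - b) * ζ ^ (2 * b) * ph b 0 0 s z ζ := by
  have hI : besselI (b - 1 / 2) (z * ζ / s) =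
      (z * ζ / s / 2) ^ (b - 1 / 2) * bE (b - 1 / 2) (z ^ 2 * ζ ^ 2 / (4 * s ^ 2)) := by
    unfold besselI bE
    rw [← tsum_mul_left]
    refine tsum_congr fun k => ?_
    have hx : 0 < z * ζ / s / 2 := by positivity
    rw [Real.rpow_add hx, show (2 * (k : ℝ)) = ((2 * k : ℕ) : ℝ) by push_cast; ring,
      Real.rpow_natCast, pow_mul,
      show (z * ζ / s / 2) ^ 2 = z ^ 2 * ζ ^ 2 / (4 * s ^ 2) by field_simp; norm_num]
    ring
  rw [besselKernel, hI, ph_pos hs]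
  have e : Real.sqrt (z * ζ) / s * (ζ / z) ^ b * (z * ζ / s / 2) ^ (b - 1 / 2)
      = (2 : ℝ) ^ (1 / 2 - b) * ζ ^ (2 * b) * s ^ (-(b + 1 / 2)) := by
    have hl : ∀ x y : ℝ, 0 < x → 0 < y → Real.log x = Real.log y → x = y :=
      fun x y hx hy h => Real.log_injOn_pos hx hy h
    refine hl _ _ (by positivity) (by positivity) ?_
    have hq : 0 < Real.sqrt (z * ζ) := by positivity
    rw [Real.log_mul (by positivity) (by positivity), Real.log_mul (by positivity) (by positivity),
      Real.log_div hq.ne' hs.ne', Real.log_mul (by positivity) (by positivity),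
      Real.log_mul (by positivity) (by positivity), Real.log_rpow (by positivity),
      Real.log_rpow (by positivity), Real.log_rpow (by positivity), Real.log_rpow (by positivity),
      Real.log_rpow (by positivity), Real.log_sqrt (by positivity),
      Real.log_div hζ.ne' hz.ne', Real.log_div (by positivity) (by norm_num),
      Real.log_div (by positivity) hs.ne', Real.log_mul hz.ne' hζ.ne']
    ring
  simp only [Nat.cast_zero, add_zero, pow_zero, mul_one]
  linear_combination (Real.exp (-(z ^ 2 + ζ ^ 2) / (2 * s)) *
    bE (b - 1 / 2) (z ^ 2 * ζ ^ 2 / (4 * s ^ 2))) * e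

lemma deriv_besselKernel {b s z ζ : ℝ} (hb : 1 / 2 ≤ b) (hs : 0 ≤ s) (hz : 0 < z) (hζ : 0 < ζ) :
    deriv (fun x => besselKernel b s z x) ζ =
      (2 : ℝ) ^ (1 / 2 - b) * ζ ^ (2 * b - 1) * bH b s z ζ := by
  rcases hs.eq_or_lt with hs | hs
  · subst hs
    simp [besselKernel, bH_nonpos]
  · have h1 : (fun x => besselKernel b s z x) =ᶠ[𝓝 ζ]
        fun x => (2 : ℝ) ^ (1 / 2 - b) * x ^ (2 * b) * ph b 0 0 s x z := by
      filter_upwards [lt_mem_nhds hζ] with x hx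
      rw [besselKernel_eq hs hz hx, ph_symm]
    rw [h1.deriv_eq]
    have h2 := ((Real.hasDerivAt_rpow_const (p := 2 * b) (Or.inl hζ.ne')).const_mul
      ((2 : ℝ) ^ (1 / 2 - b))).mul (ph_hasDerivAt_z hb 0 0 s ζ z)
    refine h2.deriv.trans ?_
    rw [bH, ph_symm b 0 0 s z, ph_symm b 1 0 s z, ph_symm b 2 1 s z]
    have h3 : ζ ^ (2 * b) = ζ ^ (2 * b - 1) * ζ := by
      rw [Real.rpow_sub_one hζ.ne']
      field_simp
    simp only [h3, Nat.reduceAdd]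
    ring

theorem bessel_potential_solves_pde
    (b T' : ℝ) (hb : 1 / 2 ≤ b) (hT' : 0 < T')
    (y Ψ : ℝ → ℝ)
    (hy : ContinuousOn y (Set.Icc 0 T'))
    (hypos : ∀ k ∈ Set.Icc (0 : ℝ) T', 0 < y k)
    (hΨ : ContinuousOn Ψ (Set.Icc 0 T'))
    (q : ℝ → ℝ → ℝ)
    (hq : ∀ τ z, q τ z =
      ∫ k in (0 : ℝ)..τ, Ψ k * deriv (fun ζ => besselKernel b (τ - k) z ζ) (y k))
    (τ z : ℝ) (hτ : τ ∈ Set.Ioc 0 T') (hz : ∀ k ∈ Set.Icc (0 : ℝ) τ, y k < z) :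
    IntervalIntegrable
      (fun k => Ψ k * deriv (fun ζ => besselKernel b (τ - k) z ζ) (y k))
      MeasureTheory.volume 0 τ
    ∧ Filter.Tendsto
        (fun k => Ψ k * deriv (fun ζ => besselKernel b (τ - k) z ζ) (y k))
        (nhdsWithin τ (Set.Iio τ)) (nhds 0)
    ∧ ∀ τ' z' : ℝ, τ' ∈ Set.Ioo 0 T' → (∀ k ∈ Set.Icc (0 : ℝ) τ', y k < z') →
        ContDiffAt ℝ 1 (fun t => q t z') τ' ∧
        ContDiffAt ℝ 2 (fun w => q τ' w) z' ∧
        deriv (fun t => q t z') τ'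
          = 1 / 2 * deriv (fun w => deriv (fun w' => q τ' w') w) z'
            + b / z' * deriv (fun w => q τ' w) z' := by
  obtain ⟨cH, cHs, cHz, cHzz⟩ := bH_cont hb
  set P : ℝ → ℝ := fun k => Ψ k * ((2 : ℝ) ^ (1 / 2 - b) * y k ^ (2 * b - 1)) with hP
  have cP : ContinuousOn P (Icc 0 T') :=
    hΨ.mul (continuousOn_const.mul (hy.rpow_const fun k hk => Or.inl (hypos k hk).ne'))
  have hint : ∀ t ≤ T', ∀ w, 0 < w → ∀ k ∈ Icc 0 t,
      Ψ k * deriv (fun ζ => besselKernel b (t - k) w ζ) (y k) = P k * bH b (t - k) w (y k) := by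
    intro t ht w hw k hk
    rw [deriv_besselKernel hb (by linarith [hk.2]) hw (hypos k ⟨hk.1, hk.2.trans ht⟩), hP]
    ring
  have zpos : ∀ t, 0 ≤ t → t ≤ T' → ∀ w, (∀ k ∈ Icc (0 : ℝ) t, y k < w) → 0 < w := by
    intro t h0 h1 w hw
    exact (hypos 0 ⟨le_rfl, hT'.le⟩).trans (hw 0 ⟨le_rfl, h0⟩)
  have hsub : Icc 0 τ ⊆ Icc 0 T' := Icc_subset_Icc_right hτ.2
  have cI : ContinuousOn (fun k => Ψ k * deriv (fun ζ => besselKernel b (τ - k) z ζ) (y k))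
      (Icc 0 τ) := by
    have hz0 := zpos τ hτ.1.le hτ.2 z hz
    refine ContinuousOn.congr (f := fun k => P k * bH b (τ - k) z (y k)) ?_
      (fun k hk => hint τ hτ.2 z hz0 k hk)
    refine (cP.mono hsub).mul ?_
    exact cH.comp (f := fun k => (τ - k, z, y k))
      ((continuousOn_const.sub continuousOn_id).prodMk
        (continuousOn_const.prodMk (hy.mono hsub)))
      (fun k hk => ⟨hypos k (hsub hk), hz k hk⟩)
  refine ⟨cI.intervalIntegrable_of_Icc hτ.1.le, ?_, ?_⟩
  · have h1 := cI τ ⟨hτ.1.le, le_rfl⟩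
    have h2 : Ψ τ * deriv (fun ζ => besselKernel b (τ - τ) z ζ) (y τ) = 0 := by
      rw [hint τ hτ.2 z (zpos τ hτ.1.le hτ.2 z hz) τ ⟨hτ.1.le, le_rfl⟩, bH_nonpos (by simp),
        mul_zero]
    rw [ContinuousWithinAt, h2] at h1
    refine h1.mono_left ?_
    rw [← nhdsWithin_Ioo_eq_nhdsLT hτ.1]
    exact nhdsWithin_mono _ Ioo_subset_Icc_self
  intro τ' z' hτ' hz'
  have hz0' := zpos τ' hτ'.1.le hτ'.2.le z' hz'
  obtain ⟨M, hM1, hM2, hM3⟩ : ∃ M, τ' < M ∧ M ≤ T' ∧ ∀ k ∈ Icc 0 M, y k < z' := by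
    have hc : ContinuousAt y τ' := hy.continuousAt (Icc_mem_nhds hτ'.1 hτ'.2)
    have he : ∀ᶠ k in 𝓝 τ', y k < z' := hc.eventually (gt_mem_nhds (hz' τ' ⟨hτ'.1.le, le_rfl⟩))
    obtain ⟨ε, hε, hball⟩ := Metric.eventually_nhds_iff.1 he
    refine ⟨min (τ' + ε / 2) T', lt_min (by linarith) hτ'.2, min_le_right _ _, fun k hk => ?_⟩
    rcases le_or_gt k τ' with h | h
    · exact hz' k ⟨hk.1, h⟩
    · apply hball
      rw [Real.dist_eq, abs_of_pos (by linarith)]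
      have := hk.2.trans (min_le_left _ _)
      linarith
  have hM0 : 0 ≤ M := (hτ'.1.trans hM1).le
  have hsubM : Icc 0 M ⊆ Icc 0 T' := Icc_subset_Icc_right hM2
  have hyM := hy.mono hsubM
  have cPM := cP.mono hsubM
  obtain ⟨k0, hk0, hmax⟩ := isCompact_Icc.exists_isMaxOn (nonempty_Icc.2 hM0) hyM
  set w0 := y k0 with hw0
  have hw0' : w0 < z' := hM3 k0 hk0
  have hw0pos : 0 < w0 := hypos k0 (hsubM hk0)
  have hlt : ∀ w ∈ Ioi w0, ∀ k ∈ Icc 0 M, y k < w := fun w hw k hk =>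
    lt_of_le_of_lt (hmax hk) hw
  have hqM : ∀ t ∈ Ioo 0 M, ∀ w ∈ Ioi w0, q t w = ∫ k in (0:ℝ)..M, P k * bH b (t - k) w (y k) := by
    intro t ht w hw
    have hw1 : 0 < w := hw0pos.trans hw
    rw [hq]
    have e1 : ∫ k in (0 : ℝ)..t, Ψ k * deriv (fun ζ => besselKernel b (t - k) w ζ) (y k)
        = ∫ k in (0 : ℝ)..t, P k * bH b (t - k) w (y k) := by
      refine intervalIntegral.integral_congr fun k hk => ?_
      rw [uIcc_of_le ht.1.le] at hk
      exact hint t (ht.2.le.trans hM2) w hw1 k hk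
    have e2 : ∫ k in t..M, P k * bH b (t - k) w (y k) = 0 := by
      rw [← intervalIntegral.integral_zero (a := t) (b := M) (μ := MeasureTheory.volume)]
      refine intervalIntegral.integral_congr fun k hk => ?_
      rw [uIcc_of_le ht.2.le] at hk
      rw [bH_nonpos (by linarith [hk.1]), mul_zero]
    have cF : ContinuousOn (fun k => P k * bH b (t - k) w (y k)) (Icc 0 M) := by
      refine cPM.mul ?_
      exact cH.comp (f := fun k => (t - k, w, y k))
        ((continuousOn_const.sub continuousOn_id).prodMk (continuousOn_const.prodMk hyM))
        (fun k hk => ⟨hypos k (hsubM hk), hlt w hw k hk⟩)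
    rw [e1, ← intervalIntegral.integral_add_adjacent_intervals (b := t) (c := M), e2, add_zero]
    · exact (cF.mono (Icc_subset_Icc_right ht.2.le)).intervalIntegrable_of_Icc ht.1.le
    · exact (cF.mono (Icc_subset_Icc_left ht.1.le)).intervalIntegrable_of_Icc ht.2.le
  have cT : ∀ G : ℝ → ℝ → ℝ → ℝ,
      ContinuousOn (fun p : ℝ × ℝ × ℝ => G p.1 p.2.1 p.2.2) {p | 0 < p.2.2 ∧ p.2.2 < p.2.1} →
      ContinuousOn (fun p : ℝ × ℝ => P p.2 * G (p.1 - p.2) z' (y p.2)) (Ioo 0 M ×ˢ Icc 0 M) := by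
    intro G hG
    refine (cPM.comp continuousOn_snd fun p hp => hp.2).mul ?_
    exact hG.comp (f := fun p : ℝ × ℝ => (p.1 - p.2, z', y p.2))
      ((continuousOn_fst.sub continuousOn_snd).prodMk (continuousOn_const.prodMk
        (hyM.comp continuousOn_snd fun p hp => hp.2)))
      (fun p hp => ⟨hypos p.2 (hsubM hp.2), hM3 p.2 hp.2⟩)
  have cW : ∀ G : ℝ → ℝ → ℝ → ℝ,
      ContinuousOn (fun p : ℝ × ℝ × ℝ => G p.1 p.2.1 p.2.2) {p | 0 < p.2.2 ∧ p.2.2 < p.2.1} →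
      ContinuousOn (fun p : ℝ × ℝ => P p.2 * G (τ' - p.2) p.1 (y p.2)) (Ioi w0 ×ˢ Icc 0 M) := by
    intro G hG
    refine (cPM.comp continuousOn_snd fun p hp => hp.2).mul ?_
    exact hG.comp (f := fun p : ℝ × ℝ => (τ' - p.2, p.1, y p.2))
      ((continuousOn_const.sub continuousOn_snd).prodMk (continuousOn_fst.prodMk
        (hyM.comp continuousOn_snd fun p hp => hp.2)))
      (fun p hp => ⟨hypos p.2 (hsubM hp.2), hlt p.1 hp.1 p.2 hp.2⟩)
  have hτM : τ' ∈ Ioo 0 M := ⟨hτ'.1, hM1⟩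
  obtain ⟨dT, dTc⟩ := param_integral isOpen_Ioo hM0
    (F := fun t k => P k * bH b (t - k) z' (y k)) (F' := fun t k => P k * bHs b (t - k) z' (y k))
    (cT _ cH) (cT _ cHs) (by
      intro t ht k hk
      have h := bH_hasDerivAt_s hb (t - k) (hypos k (hsubM hk)) (hM3 k hk)
      exact (h.comp_sub_const t k).const_mul (P k))
  obtain ⟨dZ, dZc⟩ := param_integral isOpen_Ioi hM0
    (F := fun w k => P k * bH b (τ' - k) w (y k)) (F' := fun w k => P k * bHz b (τ' - k) w (y k))
    (cW _ cH) (cW _ cHz)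
    (fun w hw k hk => (bH_hasDerivAt_z hb (τ' - k) w (y k)).const_mul (P k))
  obtain ⟨dZZ, dZZc⟩ := param_integral isOpen_Ioi hM0
    (F := fun w k => P k * bHz b (τ' - k) w (y k)) (F' := fun w k => P k * bHzz b (τ' - k) w (y k))
    (cW _ cHz) (cW _ cHzz)
    (fun w hw k hk => (bHz_hasDerivAt_z hb (τ' - k) w (y k)).const_mul (P k))
  have qT : ∀ t ∈ Ioo 0 M, HasDerivAt (fun t => q t z')
      (∫ k in (0:ℝ)..M, P k * bHs b (t - k) z' (y k)) t := by
    intro t ht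
    refine (dT t ht).congr_of_eventuallyEq ?_
    filter_upwards [isOpen_Ioo.mem_nhds ht] with s hs using hqM s hs z' hw0'
  have qZ : ∀ w ∈ Ioi w0, HasDerivAt (fun w => q τ' w)
      (∫ k in (0:ℝ)..M, P k * bHz b (τ' - k) w (y k)) w := by
    intro w hw
    refine (dZ w hw).congr_of_eventuallyEq ?_
    filter_upwards [isOpen_Ioi.mem_nhds hw] with v hv using hqM τ' hτM v hv
  have qZZ : ∀ w ∈ Ioi w0, HasDerivAt (deriv fun w => q τ' w)
      (∫ k in (0:ℝ)..M, P k * bHzz b (τ' - k) w (y k)) w := by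
    intro w hw
    refine (dZZ w hw).congr_of_eventuallyEq ?_
    filter_upwards [isOpen_Ioi.mem_nhds hw] with v hv using (qZ v hv).deriv
  refine ⟨?_, ?_, ?_⟩
  · have : ContDiffOn ℝ (0 + 1) (fun t => q t z') (Ioo 0 M) := by
      rw [contDiffOn_succ_iff_deriv_of_isOpen isOpen_Ioo]
      refine ⟨fun t ht => (qT t ht).differentiableAt.differentiableWithinAt, by simp, ?_⟩
      rw [contDiffOn_zero]
      exact dTc.congr fun t ht => (qT t ht).deriv
    rw [zero_add] at this
    exact this.contDiffAt (isOpen_Ioo.mem_nhds hτM)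
  · have : ContDiffOn ℝ (1 + 1) (fun w => q τ' w) (Ioi w0) := by
      rw [contDiffOn_succ_iff_deriv_of_isOpen isOpen_Ioi]
      refine ⟨fun t ht => (qZ t ht).differentiableAt.differentiableWithinAt, by simp, ?_⟩
      rw [← zero_add (1 : WithTop ℕ∞), contDiffOn_succ_iff_deriv_of_isOpen isOpen_Ioi]
      refine ⟨fun t ht => (qZZ t ht).differentiableAt.differentiableWithinAt, by simp, ?_⟩
      rw [contDiffOn_zero]
      exact dZZc.congr fun t ht => (qZZ t ht).deriv
    rw [one_add_one_eq_two] at this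
    exact this.contDiffAt (isOpen_Ioi.mem_nhds hw0')
  · have i1 : ∀ G : ℝ → ℝ → ℝ → ℝ,
      ContinuousOn (fun p : ℝ × ℝ × ℝ => G p.1 p.2.1 p.2.2) {p | 0 < p.2.2 ∧ p.2.2 < p.2.1} →
      IntervalIntegrable (fun k => P k * G (τ' - k) z' (y k)) MeasureTheory.volume 0 M := by
      intro G hG
      refine ContinuousOn.intervalIntegrable_of_Icc hM0 ?_
      exact (cW G hG).comp (f := fun k : ℝ => (z', k)) (by fun_prop) (fun k hk => ⟨hw0', hk⟩)
    have e2 : deriv (fun w => deriv (fun w' => q τ' w') w) z' =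
        ∫ k in (0:ℝ)..M, P k * bHzz b (τ' - k) z' (y k) := (qZZ z' hw0').deriv
    rw [(qT τ' hτM).deriv, (qZ z' hw0').deriv, e2, ← intervalIntegral.integral_const_mul,
      ← intervalIntegral.integral_const_mul, ← intervalIntegral.integral_add
        ((i1 _ cHzz).const_mul _) ((i1 _ cHz).const_mul _)]
    refine intervalIntegral.integral_congr fun k hk => ?_
    rw [bH_pde hb _ hz0'.ne']
    ring
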